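/- Let G be a finite simple bipartite graph with a bipartition V(G) = X ∪ Y (X and Y disjoint, every edge joining X and Y) that is convex: there is a linear order ≤ on X such that for every y ∈ Y, the neighbourhood N(y) is an interval in (X, ≤), i.e. whenever x₁ ≤ x₂ ≤ x₃ with x₁, x₃ ∈ N(y) then x₂ ∈ N(y). Then there exists a linear order σ on V(G) such that for every initial segment A of σ, every nonempty subset S ⊆ A has a subset R ⊆ S with |R| ≤ 1 and N(S) ∩ (V(G) ∖ A) = N(R) ∩ (V(G) ∖ A); consequently the cut-neighbourhood family of each initial segment A has at most |A| + 1 ≤ |V(G)| elements. (This witnesses that every n-vertex convex graph has boolean-width at most log₂ n.) -/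

import Mathlib

/-- `nbhds G X` is `N(X)`, the union of the open neighbourhoods of the vertices of `X`. -/
def nbhds {V : Type*} (G : SimpleGraph V) (X : Set V) : Set V :=
  {v | ∃ x ∈ X, G.Adj x v}

/-- The cut-neighbourhood family of `A`: `{N(X) ∩ (V ∖ A) : X ⊆ A}`. -/
def cutNbhdFamily {V : Type*} (G : SimpleGraph V) (A : Set V) : Set (Set V) :=
  {S | ∃ X ⊆ A, S = nbhds G X ∩ Aᶜ}

/-! Order the vertices so that the elements of `X` appear in the given order and every vertex
outside `X` comes directly after its last neighbour, or at the very start if it has none. Let `A` be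
an initial segment. A vertex of `A` outside `X` has no neighbour outside `A`. If `x₁ ≤ x₂` are
elements of `X ∩ A` and `y ∉ A` is adjacent to `x₁`, then `y` has a neighbour `x₃ ≥ x₂`, since
otherwise `y` would come before `x₂`; by convexity `y` is adjacent to `x₂`. So the sets `N(a) ∖ A`
with `a ∈ A` form a chain, and a finite nonempty union of them is the largest one. -/

open Set

section Nbhds

variable {V : Type*} (G : SimpleGraph V)

theorem nbhds_mono {S T : Set V} (h : S ⊆ T) : nbhds G S ⊆ nbhds G T :=
  fun _ ⟨x, hx, hadj⟩ => ⟨x, h hx, hadj⟩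

theorem nbhds_empty : nbhds G ∅ = ∅ := by
  simp [nbhds]

theorem nbhds_singleton (v : V) : nbhds G {v} = G.neighborSet v := by
  ext w
  simp [nbhds]

end Nbhds

/-- `A` is one side of a nested cut: the cut-neighbourhoods `N(a) ∖ A` of the vertices `a ∈ A` form
a chain under inclusion. -/
def IsNestedCut {V : Type*} (G : SimpleGraph V) (A : Set V) : Prop :=
  ∀ a ∈ A, ∀ b ∈ A, G.neighborSet a ∩ Aᶜ ⊆ G.neighborSet b ∩ Aᶜ ∨
    G.neighborSet b ∩ Aᶜ ⊆ G.neighborSet a ∩ Aᶜ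

namespace IsNestedCut

variable {V : Type*} {G : SimpleGraph V} {A S : Set V}

theorem exists_nbhds_inter_compl_eq_singleton (hA : IsNestedCut G A) (hSA : S ⊆ A) (hfin : S.Finite)
    (hne : S.Nonempty) : ∃ r ∈ S, nbhds G S ∩ Aᶜ = nbhds G {r} ∩ Aᶜ := by
  obtain ⟨r, hr, hmax⟩ := hfin.exists_maximalFor (fun v => G.neighborSet v ∩ Aᶜ) S hne
  have hle : ∀ s ∈ S, G.neighborSet s ∩ Aᶜ ⊆ G.neighborSet r ∩ Aᶜ := fun s hs =>
    (hA s (hSA hs) r (hSA hr)).elim id (hmax hs)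
  refine ⟨r, hr, Subset.antisymm ?_ ?_⟩
  · rintro v ⟨⟨s, hs, hadj⟩, hv⟩
    rw [nbhds_singleton]
    exact hle s hs ⟨hadj, hv⟩
  · exact inter_subset_inter_left _ (nbhds_mono G (singleton_subset_iff.2 hr))

theorem ncard_cutNbhdFamily_le (hA : IsNestedCut G A) (hfin : A.Finite) :
    (cutNbhdFamily G A).ncard ≤ A.ncard + 1 := by
  have hsub : cutNbhdFamily G A ⊆ insert ∅ ((fun a => nbhds G {a} ∩ Aᶜ) '' A) := by
    rintro _ ⟨S, hSA, rfl⟩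
    obtain rfl | hne := S.eq_empty_or_nonempty
    · exact Or.inl (by rw [nbhds_empty, empty_inter])
    · obtain ⟨r, hr, heq⟩ := hA.exists_nbhds_inter_compl_eq_singleton hSA (hfin.subset hSA) hne
      exact Or.inr ⟨r, hSA hr, heq.symm⟩
  calc (cutNbhdFamily G A).ncard
      ≤ (insert ∅ ((fun a => nbhds G {a} ∩ Aᶜ) '' A)).ncard :=
        ncard_le_ncard hsub ((hfin.image _).insert ∅)
    _ ≤ ((fun a => nbhds G {a} ∩ Aᶜ) '' A).ncard + 1 := ncard_insert_le _ _
    _ ≤ A.ncard + 1 := Nat.add_le_add_right (ncard_image_le hfin) 1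

end IsNestedCut

theorem exists_linearOrder_lt_of_lt {V α : Type*} [LinearOrder α] (f : V → α) :
    ∃ σ : LinearOrder V, ∀ v w, f v < f w → σ.lt v w := by
  obtain ⟨_, -⟩ := exists_wellFoundedLT V
  have hinj : Function.Injective fun v => toLex (f v, v) := fun v w h =>
    congrArg (fun p => (ofLex p).2) h
  exact ⟨LinearOrder.lift' _ hinj, fun v w h => Prod.Lex.toLex_lt_toLex.2 (Or.inl h)⟩

/-- `G` is a convex bipartite graph with sides `X` and `Y`, the order on `X` having the adjacency
property. As in `SimpleGraph.IsBipartiteWith`, vertices outside `X ∪ Y` are allowed and isolated. -/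
structure IsConvexBipartite {V : Type*} (G : SimpleGraph V) (X Y : Set V) [LinearOrder X] : Prop
    extends G.IsBipartiteWith X Y where
  ordConnected : ∀ y ∈ Y, {x : X | G.Adj x y}.OrdConnected

/-- The sort key of `v` in the ordering that lists `X` increasingly and puts every vertex outside
`X` directly after its last neighbour. When no two members of `X` are adjacent, `x ∈ X` gets the
lower set of elements up to `x`; a vertex outside `X` gets the lower set generated by its
neighbours, which need not have a last one when `X` is infinite. The second component breaks ties
in favour of members of `X`. -/
def sortKey {V : Type*} (G : SimpleGraph V) (X : Set V) [Preorder X] (v : V) :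
    LowerSet X ×ₗ Prop :=
  toLex (lowerClosure {x : X | (x : V) = v ∨ G.Adj x v}, v ∉ X)

section SortKey

variable {V : Type*} {G : SimpleGraph V} {X Y A : Set V} [Preorder X]

theorem sortKey_lt_of_adj (hG : G.IsBipartiteWith X Y) {x y : V} (hx : x ∈ X)
    (hadj : G.Adj x y) : sortKey G X x < sortKey G X y := by
  have hy : y ∉ X := disjoint_right.1 hG.disjoint (hG.mem_of_mem_adj hx hadj)
  have hle : lowerClosure {x' : X | (x' : V) = x ∨ G.Adj x' x} ≤
      lowerClosure {x' : X | (x' : V) = y ∨ G.Adj x' y} := by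
    refine lowerClosure_mono ?_
    rintro x' (rfl | hadj')
    · exact Or.inr hadj
    · exact (disjoint_left.1 hG.disjoint hx (hG.mem_of_mem_adj x'.2 hadj')).elim
  have hlt : (x ∉ X) < (y ∉ X) := lt_iff_le_not_ge.2 ⟨fun _ => hy, fun h => h hy hx⟩
  exact Prod.Lex.toLex_lt_toLex'.2 ⟨hle, fun _ => hlt⟩

theorem sortKey_lt_of_forall_lt {x : X} {y : V} (hy : y ∉ X)
    (hlt : ∀ x' : X, G.Adj x' y → x' < x) : sortKey G X y < sortKey G X x := by
  refine Prod.Lex.toLex_lt_toLex.2 (Or.inl (lt_of_le_not_ge ?_ fun hge => ?_))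
  · rintro x'' ⟨x', rfl | hadj, hle⟩
    · exact (hy x'.2).elim
    · exact ⟨x, Or.inl rfl, hle.trans (hlt x' hadj).le⟩
  · have hx : x ∈ lowerClosure {x' : X | (x' : V) = y ∨ G.Adj x' y} :=
      hge (subset_lowerClosure (Or.inl rfl))
    obtain ⟨x', rfl | hadj, hle⟩ := hx
    · exact hy x'.2
    · exact hle.not_gt (hlt x' hadj)

theorem neighborSet_inter_compl_eq_empty (hG : G.IsBipartiteWith X Y)
    (hA : ∀ a ∈ A, ∀ b, sortKey G X b < sortKey G X a → b ∈ A) {y : V} (hyA : y ∈ A)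
    (hyX : y ∉ X) : G.neighborSet y ∩ Aᶜ = ∅ := by
  rw [← disjoint_iff_inter_eq_empty, disjoint_compl_right_iff_subset]
  intro x hadj
  have hx : x ∈ X := ((hG.mem_of_adj hadj).resolve_left fun h => hyX h.1).2
  exact hA y hyA x (sortKey_lt_of_adj hG hx hadj.symm)

end SortKey

namespace IsConvexBipartite

variable {V : Type*} {G : SimpleGraph V} {X Y A : Set V} [LinearOrder X]

theorem neighborSet_inter_compl_subset (hG : IsConvexBipartite G X Y)
    (hA : ∀ a ∈ A, ∀ b, sortKey G X b < sortKey G X a → b ∈ A) {x₁ x₂ : X} (hle : x₁ ≤ x₂)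
    (hx₂ : (x₂ : V) ∈ A) : G.neighborSet x₁ ∩ Aᶜ ⊆ G.neighborSet x₂ ∩ Aᶜ := by
  rintro y ⟨hadj₁, hyA⟩
  have hyY : y ∈ Y := hG.mem_of_mem_adj x₁.2 hadj₁
  have hyX : y ∉ X := disjoint_right.1 hG.disjoint hyY
  obtain ⟨x₃, hadj₃, hle₃⟩ : ∃ x₃ : X, G.Adj x₃ y ∧ x₂ ≤ x₃ := by
    by_contra! hlt
    exact hyA (hA x₂ hx₂ y (sortKey_lt_of_forall_lt hyX hlt))
  exact ⟨(hG.ordConnected y hyY).out hadj₁ hadj₃ ⟨hle, hle₃⟩, hyA⟩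

theorem isNestedCut (hG : IsConvexBipartite G X Y)
    (hA : ∀ a ∈ A, ∀ b, sortKey G X b < sortKey G X a → b ∈ A) : IsNestedCut G A := by
  intro a ha b hb
  by_cases haX : a ∈ X
  · by_cases hbX : b ∈ X
    · exact (le_total (⟨a, haX⟩ : X) ⟨b, hbX⟩).imp
        (fun h => hG.neighborSet_inter_compl_subset hA h hb)
        (fun h => hG.neighborSet_inter_compl_subset hA h ha)
    · exact Or.inr (by simp [neighborSet_inter_compl_eq_empty hG.toIsBipartiteWith hA hb hbX])
  · exact Or.inl (by simp [neighborSet_inter_compl_eq_empty hG.toIsBipartiteWith hA ha haX])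

theorem exists_linearOrder_isNestedCut (hG : IsConvexBipartite G X Y) :
    ∃ σ : LinearOrder V, ∀ A : Set V, (∀ a ∈ A, ∀ b, σ.le b a → b ∈ A) → IsNestedCut G A := by
  obtain ⟨σ, hσ⟩ := exists_linearOrder_lt_of_lt (sortKey G X)
  exact ⟨σ, fun A hA => hG.isNestedCut fun a ha b hlt => hA a ha b (hσ b a hlt).le⟩

end IsConvexBipartite

theorem convex_graph_cut_nbhds_general {V : Type*} {G : SimpleGraph V} {X Y : Set V}
    [LinearOrder X] (hG : IsConvexBipartite G X Y) :
    ∃ σ : LinearOrder V, ∀ A : Set V, (∀ a ∈ A, ∀ b : V, σ.le b a → b ∈ A) →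
      (∀ S ⊆ A, S.Finite → S.Nonempty →
          ∃ R ⊆ S, R.ncard ≤ 1 ∧ nbhds G S ∩ Aᶜ = nbhds G R ∩ Aᶜ) ∧
        (A.Finite → (cutNbhdFamily G A).ncard ≤ A.ncard + 1) := by
  obtain ⟨σ, hσ⟩ := hG.exists_linearOrder_isNestedCut
  refine ⟨σ, fun A hA => ⟨fun S hSA hfin hne => ?_, (hσ A hA).ncard_cutNbhdFamily_le⟩⟩
  obtain ⟨r, hr, heq⟩ := (hσ A hA).exists_nbhds_inter_compl_eq_singleton hSA hfin hne
  exact ⟨{r}, singleton_subset_iff.2 hr, (ncard_singleton r).le, heq⟩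

theorem convex_graph_cut_nbhds {V : Type*} [Fintype V] (G : SimpleGraph V)
    (X Y : Set V) (hcover : X ∪ Y = Set.univ) (hdisj : Disjoint X Y)
    (hbip : ∀ u v : V, G.Adj u v → (u ∈ X ∧ v ∈ Y) ∨ (u ∈ Y ∧ v ∈ X))
    (lo : LinearOrder X)
    (hconvex : ∀ y ∈ Y, ∀ x₁ x₂ x₃ : X, lo.le x₁ x₂ → lo.le x₂ x₃ →
      G.Adj (x₁ : V) y → G.Adj (x₃ : V) y → G.Adj (x₂ : V) y) :
    ∃ σ : LinearOrder V, ∀ A : Set V, (∀ a ∈ A, ∀ b : V, σ.le b a → b ∈ A) →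
      ((∀ S : Set V, S ⊆ A → S.Nonempty →
          ∃ R ⊆ S, R.ncard ≤ 1 ∧ nbhds G S ∩ Aᶜ = nbhds G R ∩ Aᶜ) ∧
        (cutNbhdFamily G A).ncard ≤ A.ncard + 1) := by
  obtain ⟨σ, hσ⟩ := convex_graph_cut_nbhds_general (G := G) ⟨⟨hdisj, hbip⟩, fun y hy =>
    ⟨fun x₁ h₁ x₃ h₃ x₂ h => hconvex y hy x₁ x₂ x₃ h.1 h.2 h₁ h₃⟩⟩
  exact ⟨σ, fun A hA => ⟨fun S hSA => (hσ A hA).1 S hSA S.toFinite, (hσ A hA).2 A.toFinite⟩⟩
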